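/- In the obstacle-problem setting, assume in addition that the threshold function is the reciprocal degree, 𝔯(a) = 1/deg(a) for every a ∈ V. Then the discrete cluster satisfies the mass bound |Λ| ≤ 𝔱 · deg(o), where |Λ| is the number of vertices in Λ. -/

import Mathlib

/-!
Write `w` for the obstacle solution and `v = w - φ`. The proof is a summation by parts of `Δv`
over the cluster `Λ = {v > 0}`.

* The solution is itself admissible (`sum_obstSol_le`, `le_obstSol`), being a pointwise infimum of
  admissible functions. The zero function is admissible, so `w ≤ 0`; hence `w = φ = 0` on the
  boundary, and `Λ ⊆ V`.
* At a vertex of `Λ` the constraint `Δw ≤ 1 / deg` is tight (`one_le_sum_obstSol`): otherwise `w`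
  could be lowered slightly at that vertex and stay admissible. Thus
  `deg a * Δv(a) ≥ 1 - t * deg o * 1{a = o}` for `a ∈ Λ`.
* Summing `v b - v a` over `a ∈ Λ`, `b ∼ a`, the pairs inside `Λ` cancel by antisymmetry and the
  pairs leaving `Λ` contribute `0 - v a ≤ 0` (`sum_sum_sub_nonpos`). So the total is nonpositive,
  which gives `|Λ| - t * deg o ≤ 0`.
-/

open Finset

/-- Degree-normalized graph Laplacian:
`Δu(a) = (1/deg a) * ∑_{b ∼ a} (u b - u a)`. -/
noncomputable def lap {V : Type*} (G : SimpleGraph V) [∀ v : V, Fintype (G.neighborSet v)]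
    (u : V → ℝ) (a : V) : ℝ :=
  (1 / (G.degree a : ℝ)) * ∑ b ∈ G.neighborFinset a, (u b - u a)

/-- Outer vertex boundary of a finite set of vertices: vertices not in `A`
adjacent to some vertex of `A`. -/
def bdry {V : Type*} [DecidableEq V] (G : SimpleGraph V) [∀ v : V, Fintype (G.neighborSet v)]
    (A : Finset V) : Finset V :=
  (A.biUnion fun a => G.neighborFinset a) \ A

/-- Closure `cl(A) = A ∪ ∂A` of a finite set of vertices. -/
def clo {V : Type*} [DecidableEq V] (G : SimpleGraph V) [∀ v : V, Fintype (G.neighborSet v)]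
    (A : Finset V) : Finset V :=
  A ∪ bdry G A

/-- A function `u` is admissible for the discrete obstacle problem with threshold `r`
and obstacle `φ` on the vertex set `Vs` if `Δu ≤ r` on `Vs` and `u ≥ φ` on `cl(Vs)`. -/
def Admissible {V : Type*} [DecidableEq V] (G : SimpleGraph V)
    [∀ v : V, Fintype (G.neighborSet v)]
    (Vs : Finset V) (r φ u : V → ℝ) : Prop :=
  (∀ a ∈ Vs, lap G u a ≤ r a) ∧ ∀ b ∈ clo G Vs, φ b ≤ u b

/-- The solution of the discrete obstacle problem: the pointwise infimum over all
admissible functions. -/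
noncomputable def obstSol {V : Type*} [DecidableEq V] (G : SimpleGraph V)
    [∀ v : V, Fintype (G.neighborSet v)]
    (Vs : Finset V) (r φ : V → ℝ) (a : V) : ℝ :=
  sInf {x | ∃ u : V → ℝ, Admissible G Vs r φ u ∧ u a = x}

section ObstacleProblem

variable {V : Type*} [DecidableEq V] {G : SimpleGraph V} [∀ v : V, Fintype (G.neighborSet v)]
  {Vs : Finset V} {r φ : V → ℝ}

lemma mem_clo_of_mem {a : V} (ha : a ∈ Vs) : a ∈ clo G Vs :=
  Finset.mem_union_left _ ha

lemma mem_clo_of_adj {a b : V} (ha : a ∈ Vs) (hb : b ∈ G.neighborFinset a) : b ∈ clo G Vs := by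
  unfold clo bdry
  by_cases h : b ∈ Vs
  · exact Finset.mem_union_left _ h
  · exact Finset.mem_union_right _
      (Finset.mem_sdiff.2 ⟨Finset.mem_biUnion.2 ⟨a, ha, hb⟩, h⟩)

lemma lap_le_one_div_iff {u : V → ℝ} {a : V} (hd : 0 < (G.degree a : ℝ)) :
    lap G u a ≤ 1 / (G.degree a : ℝ) ↔ ∑ b ∈ G.neighborFinset a, (u b - u a) ≤ 1 := by
  unfold lap
  rw [one_div, inv_mul_le_iff₀ hd, mul_inv_cancel₀ hd.ne']

lemma sum_nbr_sub (u : V → ℝ) (a : V) (c : ℝ) :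
    ∑ b ∈ G.neighborFinset a, (u b - c)
      = ∑ b ∈ G.neighborFinset a, u b - (G.degree a : ℝ) * c := by
  rw [Finset.sum_sub_distrib, Finset.sum_const, nsmul_eq_mul, G.card_neighborFinset_eq_degree]

lemma admissible_zero (hr : ∀ a ∈ Vs, 0 < r a) (hφ0 : ∀ b ∈ clo G Vs, φ b ≤ 0) :
    Admissible G Vs r φ (fun _ => 0) :=
  ⟨fun a ha => by simpa [lap] using (hr a ha).le, hφ0⟩

lemma obstSol_le {u : V → ℝ} (hu : Admissible G Vs r φ u) {a : V} (ha : a ∈ clo G Vs) :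
    obstSol G Vs r φ a ≤ u a :=
  csInf_le ⟨φ a, by rintro _ ⟨u', hu', rfl⟩; exact hu'.2 a ha⟩ ⟨u, hu, rfl⟩

lemma le_obstSol_of_forall (hr : ∀ a ∈ Vs, 0 < r a) (hφ0 : ∀ b ∈ clo G Vs, φ b ≤ 0) {a : V} {c : ℝ}
    (h : ∀ u, Admissible G Vs r φ u → c ≤ u a) : c ≤ obstSol G Vs r φ a :=
  le_csInf ⟨0, _, admissible_zero hr hφ0, rfl⟩ (by rintro _ ⟨u, hu, rfl⟩; exact h u hu)

lemma le_obstSol (hr : ∀ a ∈ Vs, 0 < r a) (hφ0 : ∀ b ∈ clo G Vs, φ b ≤ 0) {a : V}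
    (ha : a ∈ clo G Vs) : φ a ≤ obstSol G Vs r φ a :=
  le_obstSol_of_forall hr hφ0 fun _ hu => hu.2 a ha

/-- The reciprocal threshold `1 / deg a` is `0` at an isolated vertex, so positivity of the
threshold excludes isolated vertices. -/
lemma degree_pos_of_threshold (hr : ∀ a ∈ Vs, 0 < r a)
    (hrdeg : ∀ a ∈ Vs, r a = 1 / (G.degree a : ℝ)) {a : V} (ha : a ∈ Vs) :
    0 < (G.degree a : ℝ) := by
  have h := hr a ha
  rw [hrdeg a ha] at h
  exact one_div_pos.1 h

/-- The solution satisfies `Δw ≤ 1 / deg` on `Vs`, written without the normalization. -/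
lemma sum_obstSol_le (hr : ∀ a ∈ Vs, 0 < r a) (hφ0 : ∀ b ∈ clo G Vs, φ b ≤ 0)
    (hrdeg : ∀ a ∈ Vs, r a = 1 / (G.degree a : ℝ)) {a : V} (ha : a ∈ Vs) :
    ∑ b ∈ G.neighborFinset a, (obstSol G Vs r φ b - obstSol G Vs r φ a) ≤ 1 := by
  have hd := degree_pos_of_threshold hr hrdeg ha
  -- Every admissible `u` satisfies `∑ w b - 1 ≤ ∑ u b - 1 ≤ deg a * u a`; take the infimum.
  have key : (∑ b ∈ G.neighborFinset a, obstSol G Vs r φ b - 1) / (G.degree a : ℝ)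
      ≤ obstSol G Vs r φ a := by
    refine le_obstSol_of_forall hr hφ0 fun u hu => ?_
    have h1 := hu.1 a ha
    rw [hrdeg a ha, lap_le_one_div_iff hd, sum_nbr_sub] at h1
    have h2 : ∑ b ∈ G.neighborFinset a, obstSol G Vs r φ b ≤ ∑ b ∈ G.neighborFinset a, u b :=
      Finset.sum_le_sum fun b hb => obstSol_le hu (mem_clo_of_adj ha hb)
    rw [div_le_iff₀ hd]
    linarith
  rw [div_le_iff₀ hd] at key
  rw [sum_nbr_sub]
  linarith

/-- Off the contact set the constraint `Δw ≤ 1 / deg` is tight. -/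
lemma one_le_sum_obstSol (hr : ∀ a ∈ Vs, 0 < r a) (hφ0 : ∀ b ∈ clo G Vs, φ b ≤ 0)
    (hrdeg : ∀ a ∈ Vs, r a = 1 / (G.degree a : ℝ)) {a : V} (ha : a ∈ Vs)
    (hlt : φ a < obstSol G Vs r φ a) :
    1 ≤ ∑ b ∈ G.neighborFinset a, (obstSol G Vs r φ b - obstSol G Vs r φ a) := by
  by_contra! hcon
  have hd := degree_pos_of_threshold hr hrdeg ha
  set w := obstSol G Vs r φ with hw
  rw [sum_nbr_sub] at hcon
  -- Lowering `w` at `a` by `ε` raises the sum at `a` by `deg a * ε`, hence the size of `ε`.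
  obtain ⟨ε, hε, hε1, hε2⟩ : ∃ ε : ℝ, 0 < ε ∧ ε ≤ w a - φ a ∧
      (G.degree a : ℝ) * ε ≤ 1 - (∑ b ∈ G.neighborFinset a, w b - (G.degree a : ℝ) * w a) := by
    refine ⟨min (w a - φ a)
      ((1 - (∑ b ∈ G.neighborFinset a, w b - (G.degree a : ℝ) * w a)) / (G.degree a : ℝ)),
      lt_min (by linarith) (div_pos (by linarith) hd), min_le_left _ _, ?_⟩
    rw [← le_div_iff₀' hd]
    exact min_le_right _ _
  have hle : ∀ b, Function.update w a (w a - ε) b ≤ w b := by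
    intro b
    rcases eq_or_ne b a with rfl | hb
    · simp [hε.le]
    · simp [hb]
  have hadm : Admissible G Vs r φ (Function.update w a (w a - ε)) := by
    refine ⟨fun c hc => ?_, fun b hb => ?_⟩
    · have hdc := degree_pos_of_threshold hr hrdeg hc
      rw [hrdeg c hc, lap_le_one_div_iff hdc, sum_nbr_sub]
      have hsum : ∑ b ∈ G.neighborFinset c, Function.update w a (w a - ε) b
          ≤ ∑ b ∈ G.neighborFinset c, w b := Finset.sum_le_sum fun b _ => hle b
      rcases eq_or_ne c a with rfl | hca
      · rw [Function.update_self]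
        linarith
      · rw [Function.update_of_ne hca]
        have h := sum_obstSol_le hr hφ0 hrdeg hc
        rw [sum_nbr_sub] at h
        linarith
    · rcases eq_or_ne b a with rfl | hba
      · rw [Function.update_self]
        linarith
      · rw [Function.update_of_ne hba]
        exact le_obstSol hr hφ0 hb
  have h := obstSol_le hadm (mem_clo_of_mem ha)
  rw [Function.update_self, ← hw] at h
  linarith

/-- Summation by parts: if `v ≥ 0` on `Λ` and `v ≤ 0` at the neighbours outside `Λ`, the terms
inside `Λ` cancel in pairs and only nonpositive terms across the boundary remain. -/
lemma sum_sum_sub_nonpos (Λ : Finset V) (v : V → ℝ) (hpos : ∀ a ∈ Λ, 0 ≤ v a)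
    (hzero : ∀ a ∈ Λ, ∀ b ∈ G.neighborFinset a, b ∉ Λ → v b ≤ 0) :
    ∑ a ∈ Λ, ∑ b ∈ G.neighborFinset a, (v b - v a) ≤ 0 := by
  classical
  have hin : ∑ a ∈ Λ, ∑ b ∈ Λ, (if G.Adj a b then v b - v a else 0) = 0 := by
    have hcomm : ∑ a ∈ Λ, ∑ b ∈ Λ, (if G.Adj a b then v b - v a else 0)
        = -∑ a ∈ Λ, ∑ b ∈ Λ, (if G.Adj a b then v b - v a else 0) := by
      conv_lhs => rw [Finset.sum_comm]
      rw [← Finset.sum_neg_distrib]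
      refine Finset.sum_congr rfl fun a _ => ?_
      rw [← Finset.sum_neg_distrib]
      refine Finset.sum_congr rfl fun b _ => ?_
      by_cases h : G.Adj a b
      · simp [h, h.symm]
      · have h' : ¬ G.Adj b a := fun h' => h h'.symm
        simp [h, h']
    linarith
  rw [← hin]
  refine Finset.sum_le_sum fun a ha => ?_
  rw [← Finset.sum_filter, ← Finset.sum_filter_add_sum_filter_not (G.neighborFinset a) (· ∈ Λ)]
  have hset : (G.neighborFinset a).filter (· ∈ Λ) = Λ.filter (G.Adj a) := by
    ext b
    simp [and_comm]
  have hout : ∑ b ∈ (G.neighborFinset a).filter (· ∉ Λ), (v b - v a) ≤ 0 := by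
    refine Finset.sum_nonpos fun b hb => ?_
    rw [Finset.mem_filter] at hb
    linarith [hzero a ha b hb.1 hb.2, hpos a ha]
  rw [hset]
  linarith

end ObstacleProblem

/-- **Conservation of mass, upper bound (Lemma A.4, first part).**
In the obstacle-problem setting with threshold `𝔯 = 1/deg` on `V`, the discrete cluster
`Λ = {a ∈ cl(V) : w(a) > φ(a)}` satisfies `|Λ| ≤ 𝔱 · deg(o)`. -/
theorem obstacle_mass_bound {V : Type*} [DecidableEq V] [Infinite V]
    (G : SimpleGraph V) [∀ v : V, Fintype (G.neighborSet v)]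
    (hG : G.Connected)
    (Vs : Finset V) (hVne : Vs.Nonempty)
    (hVconn : (G.induce (Vs : Set V)).Connected)
    (o : V) (ho : o ∈ Vs)
    (r : V → ℝ) (hr : ∀ a ∈ Vs, 0 < r a)
    (t : ℝ) (ht : 0 < t)
    (φ : V → ℝ)
    (hφ0 : ∀ b ∈ clo G Vs, φ b ≤ 0)
    (hφlap : ∀ a ∈ Vs, lap G φ a = if a = o then t else 0)
    (hφbd : ∀ b ∈ bdry G Vs, φ b = 0)
    (hrdeg : ∀ a ∈ Vs, r a = 1 / (G.degree a : ℝ)) :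
    ∃ Λ : Finset V,
      (∀ a : V, a ∈ Λ ↔ a ∈ clo G Vs ∧ φ a < obstSol G Vs r φ a) ∧
      (Λ.card : ℝ) ≤ t * (G.degree o : ℝ) := by
  classical
  set w := obstSol G Vs r φ with hw
  refine ⟨(clo G Vs).filter fun a => φ a < w a, fun a => Finset.mem_filter, ?_⟩
  set Λ := (clo G Vs).filter fun a => φ a < w a with hΛ
  have hΛV : ∀ a ∈ Λ, a ∈ Vs := by
    intro a ha
    obtain ⟨hac, hlt⟩ := Finset.mem_filter.1 ha
    rcases Finset.mem_union.1 hac with h | h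
    · exact h
    · have h0 : w a ≤ 0 := obstSol_le (admissible_zero hr hφ0) hac
      rw [hφbd a h] at hlt
      exact absurd h0 hlt.not_ge
  have hparts := sum_sum_sub_nonpos (G := G) Λ (fun a => w a - φ a)
    (fun a ha => (sub_pos.2 (Finset.mem_filter.1 ha).2).le)
    (fun a ha b hb hbΛ => by
      have hbc := mem_clo_of_adj (hΛV a ha) hb
      have : ¬ φ b < w b := fun h => hbΛ (Finset.mem_filter.2 ⟨hbc, h⟩)
      exact sub_nonpos.2 (not_lt.1 this))
  have hlow : ∀ a ∈ Λ, 1 - (if a = o then t * (G.degree o : ℝ) else 0)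
      ≤ ∑ b ∈ G.neighborFinset a, ((w b - φ b) - (w a - φ a)) := by
    intro a ha
    have haV := hΛV a ha
    have hd := degree_pos_of_threshold hr hrdeg haV
    have h1 := one_le_sum_obstSol hr hφ0 hrdeg haV (Finset.mem_filter.1 ha).2
    have h2 : ∑ b ∈ G.neighborFinset a, (φ b - φ a)
        = if a = o then t * (G.degree o : ℝ) else 0 := by
      have h := hφlap a haV
      rw [lap, one_div, inv_mul_eq_iff_eq_mul₀ hd.ne'] at h
      rw [h]
      split_ifs with hao
      · rw [hao, mul_comm]
      · simp
    have h3 : ∑ b ∈ G.neighborFinset a, ((w b - φ b) - (w a - φ a))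
        = ∑ b ∈ G.neighborFinset a, (w b - w a) - ∑ b ∈ G.neighborFinset a, (φ b - φ a) := by
      rw [← Finset.sum_sub_distrib]
      exact Finset.sum_congr rfl fun b _ => by ring
    rw [h3, h2]
    linarith
  have hsum := (Finset.sum_le_sum hlow).trans hparts
  rw [Finset.sum_sub_distrib, Finset.sum_const, nsmul_eq_mul, mul_one, Finset.sum_ite_eq'] at hsum
  have hnn : 0 ≤ t * (G.degree o : ℝ) := by positivity
  split_ifs at hsum <;> linarith
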